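/- Let R be a commutative ring, E an R-module, A = End_R(E), and let I₁ ⊆ I₂ be right ideals of A which are direct summands of A as right A-modules. Then I ↦ Φ(I) is an inclusion-preserving bijection, with inverse N ↦ Ψ(N), from the set of right ideals I of A that are direct summands of A as right A-modules and satisfy I₁ ⊆ I ⊆ I₂, onto the set of R-submodules N of E that are direct summands of E and satisfy Φ(I₁) ⊆ N ⊆ Φ(I₂). -/

import Mathlib

/-- `Ψ(N) = {f ∈ End_R(E) : range f ⊆ N}`, as an `R`-submodule of `End_R(E)`. -/
def psi {R E : Type*} [CommRing R] [AddCommGroup E] [Module R E]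
    (N : Submodule R E) : Submodule R (Module.End R E) where
  carrier := {f | LinearMap.range f ≤ N}
  add_mem' := by
    intro f g hf hg x hx
    obtain ⟨y, rfl⟩ := LinearMap.mem_range.mp hx
    show f y + g y ∈ N
    exact N.add_mem (hf (LinearMap.mem_range_self f y)) (hg (LinearMap.mem_range_self g y))
  zero_mem' := by
    intro x hx
    obtain ⟨y, rfl⟩ := LinearMap.mem_range.mp hx
    exact N.zero_mem
  smul_mem' := by
    intro c f hf x hx
    obtain ⟨y, rfl⟩ := LinearMap.mem_range.mp hx
    show c • f y ∈ N
    exact N.smul_mem c (hf (LinearMap.mem_range_self f y))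

/-- `Φ(I)`: the `R`-submodule of `E` generated by the union of the ranges of all `f ∈ I`. -/
def phi {R E : Type*} [CommRing R] [AddCommGroup E] [Module R E]
    (I : Submodule R (Module.End R E)) : Submodule R E :=
  Submodule.span R (⋃ f ∈ I, (LinearMap.range f : Set E))

/-- A right ideal of `End_R(E)`: an `R`-submodule closed under composition on the right. -/
def IsRightIdeal {R E : Type*} [CommRing R] [AddCommGroup E] [Module R E]
    (I : Submodule R (Module.End R E)) : Prop :=
  ∀ f ∈ I, ∀ g : Module.End R E, f * g ∈ I

/-- A submodule `N` of a module `M` is a direct summand. -/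
def IsSummand {R M : Type*} [CommRing R] [AddCommGroup M] [Module R M]
    (N : Submodule R M) : Prop :=
  ∃ N' : Submodule R M, N ⊓ N' = ⊥ ∧ N ⊔ N' = ⊤

/-- A right ideal `I` of `End_R(E)` is a direct summand of `End_R(E)` as a right module
over itself: there is a right ideal `J` with `I ∩ J = 0` and `I + J = End_R(E)`. -/
def IsIdealSummand {R E : Type*} [CommRing R] [AddCommGroup E] [Module R E]
    (I : Submodule R (Module.End R E)) : Prop :=
  ∃ J : Submodule R (Module.End R E), IsRightIdeal J ∧ I ⊓ J = ⊥ ∧ I ⊔ J = ⊤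

section

variable {R E : Type*} [CommRing R] [AddCommGroup E] [Module R E]

theorem mem_psi {N : Submodule R E} {f : Module.End R E} :
    f ∈ psi N ↔ LinearMap.range f ≤ N :=
  Iff.rfl

theorem phi_le_iff {I : Submodule R (Module.End R E)} {N : Submodule R E} :
    phi I ≤ N ↔ I ≤ psi N := by
  simp only [phi, Submodule.span_le, Set.iUnion_subset_iff]
  rfl

theorem gc_phi_psi : GaloisConnection (phi (R := R) (E := E)) psi :=
  fun _ _ => phi_le_iff

theorem isRightIdeal_psi (N : Submodule R E) : IsRightIdeal (psi N) :=
  fun f hf g => (LinearMap.range_comp_le_range g f).trans hf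

theorem isSummand_iff_isCompl {N : Submodule R E} :
    IsSummand N ↔ ∃ N', IsCompl N N' := by
  simp only [IsSummand, isCompl_iff, disjoint_iff, codisjoint_iff]

theorem IsSummand.exists_idempotent {N : Submodule R E} (h : IsSummand N) :
    ∃ e : Module.End R E, IsIdempotentElem e ∧ LinearMap.range e = N := by
  obtain ⟨N', h⟩ := isSummand_iff_isCompl.1 h
  exact ⟨_, Submodule.isIdempotentElem_projection h, Submodule.range_projection h⟩

theorem isSummand_range {e : Module.End R E} (he : IsIdempotentElem e) :
    IsSummand (LinearMap.range e) :=
  isSummand_iff_isCompl.2 ⟨_, LinearMap.IsIdempotentElem.isCompl he⟩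

theorem mem_psi_range_iff {e f : Module.End R E} (he : IsIdempotentElem e) :
    f ∈ psi (LinearMap.range e) ↔ e * f = f := by
  refine ⟨fun h => LinearMap.ext fun x => ?_, fun h => ?_⟩
  · obtain ⟨y, hy⟩ := h (LinearMap.mem_range_self f x)
    rw [Module.End.mul_apply, ← hy, ← Module.End.mul_apply, he.eq]
  · rw [← h]
    exact LinearMap.range_comp_le_range f e

theorem phi_psi {N : Submodule R E} (h : IsSummand N) : phi (psi N) = N := by
  refine le_antisymm (gc_phi_psi.l_u_le N) ?_
  obtain ⟨e, -, rfl⟩ := h.exists_idempotent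
  exact (gc_phi_psi.le_u_l _ : _ ≤ psi _) (mem_psi.2 le_rfl)

theorem isIdealSummand_psi {N : Submodule R E} (h : IsSummand N) :
    IsIdealSummand (psi N) := by
  obtain ⟨e, he, rfl⟩ := h.exists_idempotent
  refine ⟨psi (LinearMap.range (1 - e)), isRightIdeal_psi _, ?_, ?_⟩
  · refine (Submodule.eq_bot_iff _).2 fun f ⟨hf, hf'⟩ => ?_
    have h₁ := (mem_psi_range_iff he).1 hf
    have h₂ := (mem_psi_range_iff he.one_sub).1 hf'
    rwa [sub_mul, one_mul, h₁, sub_self, eq_comm] at h₂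
  · refine Submodule.eq_top_iff'.2 fun f => Submodule.mem_sup.2 ⟨e * f, ?_, (1 - e) * f, ?_, ?_⟩
    · exact LinearMap.range_comp_le_range f e
    · exact LinearMap.range_comp_le_range f (1 - e)
    · rw [← add_mul, add_sub_cancel, one_mul]

theorem IsIdealSummand.exists_eq_psi {I : Submodule R (Module.End R E)}
    (hs : IsIdealSummand I) (hI : IsRightIdeal I) :
    ∃ N : Submodule R E, IsSummand N ∧ I = psi N := by
  obtain ⟨J, hJ, hinf, hsup⟩ := hs
  obtain ⟨e, he, f, hf, hef⟩ :=
    Submodule.mem_sup.1 (hsup ▸ Submodule.mem_top : (1 : Module.End R E) ∈ I ⊔ J)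
  have key : ∀ x ∈ I, e * x = x := fun x hx => by
    have hfx : f * x = x - e * x := by
      rw [eq_sub_of_add_eq' hef, sub_mul, one_mul]
    have hmem : f * x ∈ I ⊓ J := ⟨hfx ▸ I.sub_mem hx (hI e he x), hJ f hf x⟩
    rw [hinf, Submodule.mem_bot, hfx, sub_eq_zero] at hmem
    exact hmem.symm
  have hidem : IsIdempotentElem e := key e he
  refine ⟨_, isSummand_range hidem, le_antisymm (fun x hx => ?_) fun x hx => ?_⟩
  · exact (mem_psi_range_iff hidem).2 (key x hx)
  · rw [← (mem_psi_range_iff hidem).1 hx]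
    exact hI e he x

theorem IsIdealSummand.isSummand_phi {I : Submodule R (Module.End R E)}
    (hs : IsIdealSummand I) (hI : IsRightIdeal I) : IsSummand (phi I) := by
  obtain ⟨N, hN, rfl⟩ := hs.exists_eq_psi hI
  rwa [phi_psi hN]

theorem IsIdealSummand.psi_phi {I : Submodule R (Module.End R E)}
    (hs : IsIdealSummand I) (hI : IsRightIdeal I) : psi (phi I) = I := by
  obtain ⟨N, hN, rfl⟩ := hs.exists_eq_psi hI
  rw [phi_psi hN]

end

/-- For right ideals `I₁ ⊆ I₂` of `A = End_R(E)` which are direct summands of `A` as right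
`A`-modules, `I ↦ Φ(I)` is an inclusion-preserving bijection, with inverse `N ↦ Ψ(N)`, from
the set of right ideals `I` of `A` that are direct summands of `A` as right `A`-modules with
`I₁ ⊆ I ⊆ I₂`, onto the set of submodules `N` of `E` that are direct summands of `E` with
`Φ(I₁) ⊆ N ⊆ Φ(I₂)`. -/
theorem phi_bijection {R E : Type*} [CommRing R] [AddCommGroup E] [Module R E]
    (I₁ I₂ : Submodule R (Module.End R E))
    (h₁ : IsRightIdeal I₁) (h₂ : IsRightIdeal I₂)
    (hs₁ : IsIdealSummand I₁) (hs₂ : IsIdealSummand I₂) (h₁₂ : I₁ ≤ I₂) :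
    (∀ I : Submodule R (Module.End R E),
        IsRightIdeal I → IsIdealSummand I → I₁ ≤ I → I ≤ I₂ →
        IsSummand (phi I) ∧ phi I₁ ≤ phi I ∧ phi I ≤ phi I₂) ∧
    (∀ N : Submodule R E, IsSummand N → phi I₁ ≤ N → N ≤ phi I₂ →
        IsRightIdeal (psi N) ∧ IsIdealSummand (psi N) ∧ I₁ ≤ psi N ∧ psi N ≤ I₂) ∧
    (∀ I : Submodule R (Module.End R E),
        IsRightIdeal I → IsIdealSummand I → I₁ ≤ I → I ≤ I₂ → psi (phi I) = I) ∧
    (∀ N : Submodule R E, IsSummand N → phi I₁ ≤ N → N ≤ phi I₂ → phi (psi N) = N) ∧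
    (∀ I I' : Submodule R (Module.End R E),
        IsRightIdeal I → IsIdealSummand I → I₁ ≤ I → I ≤ I₂ →
        IsRightIdeal I' → IsIdealSummand I' → I₁ ≤ I' → I' ≤ I₂ →
        (I ≤ I' ↔ phi I ≤ phi I')) := by
  refine ⟨fun I hI hs hl hu => ⟨hs.isSummand_phi hI, gc_phi_psi.monotone_l hl,
      gc_phi_psi.monotone_l hu⟩,
    fun N hN hl hu => ⟨isRightIdeal_psi N, isIdealSummand_psi hN, phi_le_iff.1 hl, ?_⟩,
    fun I hI hs _ _ => hs.psi_phi hI, fun N hN _ _ => phi_psi hN,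
    fun I I' _ _ _ _ hI' hs' _ _ => ?_⟩
  · exact (gc_phi_psi.monotone_u hu).trans_eq (hs₂.psi_phi h₂)
  · rw [phi_le_iff, hs'.psi_phi hI']
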